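/- arXiv:2212.04796 — 2 statements merged into one kernel-verified Lean document; each statement's English description precedes it below -/
import Mathlib

section
/- Let V be a real vector space, p, q : V → ℝ seminorms, ν > 0, f ≥ 0, N_ω ≥ 0, N_Ω ≥ 0, C_E > 0, and let 0 < θ < 1. Let a_ω, a_Ω : V × V → ℝ be bilinear maps with a_ω(v,v) ≥ ν·p(v)², |a_ω(u,v)| ≤ ν·p(u)p(v), a_Ω(v,v) ≥ q(v)², |a_Ω(u,v)| ≤ q(u)q(v); let c_ω, c_Ω : V × V × V → ℝ be trilinear maps with c_ω(u,w,w) = 0, |c_ω(u,v,w)| ≤ N_ω·p(u)p(v)p(w), c_Ω(u,w,w) = 0, |c_Ω(u,v,w)| ≤ N_Ω·q(u)q(v)q(w); let F : V → ℝ be linear with |F(v)| ≤ f·p(v); and let E : V → V be a linear map with p(E(v) − v) = 0 and q(E(v)) ≤ C_E·p(v) for all v ∈ V. Assume N_Ω·C_E·f/ν ≤ θ. Then for every ε > 0, every y ∈ V satisfying a_ω(y,v) + ε·a_Ω(y,v) + c_ω(y,y,v) + ε·c_Ω(y,y,v) = F(v) for all v ∈ V satisfies q(y) ≤ (1/(1−θ))·C_E·f/ν.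 -/
/-!
Testing the penalized equation with `y` itself gives `p y ≤ f / ν`. Testing it with `E y - y`,
which is invisible to `p`, kills every term except the `ε`-weighted ones, so `ε` cancels and the
energy `q y ^ 2` is controlled by terms containing `q (E y) ≤ CE * f / ν`. Smallness of the data
absorbs the convective contribution into the left-hand side.
-/

section OrderedField

variable {𝕜 : Type*} [Field 𝕜] [LinearOrder 𝕜] [IsStrictOrderedRing 𝕜]

theorem le_div_of_mul_sq_le_mul {a b x : 𝕜} (ha : 0 < a) (hb : 0 ≤ b)
    (h : a * x ^ 2 ≤ b * x) : x ≤ b / a := by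
  rcases le_or_gt x 0 with hx | hx
  · exact hx.trans (div_nonneg hb ha.le)
  · rw [le_div_iff₀' ha]
    refine le_of_mul_le_mul_right ?_ hx
    linarith

theorem le_div_one_sub_of_sq_le {N m θ x : 𝕜} (hm : 0 ≤ m) (hθ : θ < 1) (hNm : N * m ≤ θ)
    (h : x ^ 2 ≤ (1 + N * x) * x * m) : x ≤ m / (1 - θ) := by
  have absorb : N * m * x ^ 2 ≤ θ * x ^ 2 := by gcongr
  exact le_div_of_mul_sq_le_mul (sub_pos.2 hθ) hm (by linarith)

theorem eq_zero_of_abs_le_mul {C s x : 𝕜} (h : |x| ≤ C * s) (hs : s = 0) : x = 0 := by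
  rw [hs, mul_zero] at h
  exact abs_nonpos_iff.1 h

end OrderedField

theorem apply_eq_apply_of_add_mul_eq {𝕜 V : Type*} [Field 𝕜] [AddCommGroup V] [Module 𝕜 V]
    {L M F : V →ₗ[𝕜] 𝕜} {ε : 𝕜} (hε : ε ≠ 0) (h : ∀ v, L v + ε * M v = F v) {y z : V}
    (hL : L (z - y) = 0) (hF : F (z - y) = 0) : M z = M y := by
  have hM : ε * M (z - y) = 0 := by simpa only [hL, hF, zero_add] using h (z - y)
  rw [← sub_eq_zero, ← map_sub]
  exact (mul_eq_zero.1 hM).resolve_left hε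

section NavierStokesOperator

variable {𝕜 V : Type*} [Field 𝕜] [AddCommGroup V] [Module 𝕜 V]

/-- The weak Navier–Stokes operator `u ↦ a(u, ·) + c(u, u, ·)`, with viscous form `a` and convective
form `c`, as a nonlinear map from `V` to its algebraic dual. It turns the penalized equation into
`A_ω(y) + ε • A_Ω(y) = F`. -/
def navierStokesOperator (a : V →ₗ[𝕜] V →ₗ[𝕜] 𝕜) (c : V →ₗ[𝕜] V →ₗ[𝕜] V →ₗ[𝕜] 𝕜) (u : V) :
    V →ₗ[𝕜] 𝕜 :=
  a u + c u u

variable {a : V →ₗ[𝕜] V →ₗ[𝕜] 𝕜} {c : V →ₗ[𝕜] V →ₗ[𝕜] V →ₗ[𝕜] 𝕜}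

theorem navierStokesOperator_apply (u v : V) :
    navierStokesOperator a c u v = a u v + c u u v :=
  rfl

theorem navierStokesOperator_apply_self {u : V} (hc : c u u u = 0) :
    navierStokesOperator a c u u = a u u := by
  rw [navierStokesOperator_apply, hc, add_zero]

variable [LinearOrder 𝕜] [IsStrictOrderedRing 𝕜]

theorem navierStokesOperator_apply_eq_zero {p : V → 𝕜} {M N : 𝕜} {u v : V}
    (ha : |a u v| ≤ M * p u * p v) (hc : |c u u v| ≤ N * p u * p u * p v) (hv : p v = 0) :
    navierStokesOperator a c u v = 0 := by
  rw [navierStokesOperator_apply, eq_zero_of_abs_le_mul ha hv, eq_zero_of_abs_le_mul hc hv,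
    add_zero]

theorem navierStokesOperator_apply_le {q : V → 𝕜} {N : 𝕜} {u v : V}
    (ha : |a u v| ≤ q u * q v) (hc : |c u u v| ≤ N * q u * q u * q v) :
    navierStokesOperator a c u v ≤ (1 + N * q u) * q u * q v :=
  calc a u v + c u u v ≤ q u * q v + N * q u * q u * q v :=
        add_le_add (le_of_abs_le ha) (le_of_abs_le hc)
    _ = (1 + N * q u) * q u * q v := by ring

end NavierStokesOperator

theorem stmt_6_general {𝕜 V : Type*} [Field 𝕜] [LinearOrder 𝕜] [IsStrictOrderedRing 𝕜]
    [AddCommGroup V] [Module 𝕜 V] {p q : V → 𝕜} (hq : ∀ v, 0 ≤ q v)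
    {ν f NΩ CE θ : 𝕜} (hν : 0 < ν) (hf : 0 ≤ f) (hNΩ : 0 ≤ NΩ) (hCE : 0 ≤ CE) (hθ : θ < 1)
    {Aω AΩ : V → V →ₗ[𝕜] 𝕜}
    (hAω_coer : ∀ v, ν * p v ^ 2 ≤ Aω v v) (hAω_null : ∀ u v, p v = 0 → Aω u v = 0)
    (hAΩ_coer : ∀ v, q v ^ 2 ≤ AΩ v v)
    (hAΩ_le : ∀ u v, AΩ u v ≤ (1 + NΩ * q u) * q u * q v)
    {F : V →ₗ[𝕜] 𝕜} (hF : ∀ v, |F v| ≤ f * p v)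
    {E : V → V} (hE_ext : ∀ v, p (E v - v) = 0) (hE_bdd : ∀ v, q (E v) ≤ CE * p v)
    (hsmall : NΩ * CE * f / ν ≤ θ) {ε : 𝕜} (hε : 0 < ε) {y : V}
    (hy : ∀ v, Aω y v + ε * AΩ y v = F v) :
    q y ≤ (1 / (1 - θ)) * CE * f / ν := by
  have hp : p y ≤ f / ν := by
    refine le_div_of_mul_sq_le_mul hν hf ?_
    calc ν * p y ^ 2 ≤ Aω y y := hAω_coer y
      _ ≤ Aω y y + ε * AΩ y y :=
        le_add_of_nonneg_right (mul_nonneg hε.le ((sq_nonneg _).trans (hAΩ_coer y)))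
      _ = F y := hy y
      _ ≤ f * p y := le_of_abs_le (hF y)
  have hqE : q (E y) ≤ CE * (f / ν) :=
    (hE_bdd y).trans (mul_le_mul_of_nonneg_left hp hCE)
  have hAΩE : AΩ y (E y) = AΩ y y :=
    apply_eq_apply_of_add_mul_eq hε.ne' hy (hAω_null y _ (hE_ext y))
      (eq_zero_of_abs_le_mul (hF _) (hE_ext y))
  have hq_sq : q y ^ 2 ≤ (1 + NΩ * q y) * q y * (CE * (f / ν)) :=
    calc q y ^ 2 ≤ AΩ y y := hAΩ_coer y
      _ = AΩ y (E y) := hAΩE.symm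
      _ ≤ (1 + NΩ * q y) * q y * q (E y) := hAΩ_le y (E y)
      _ ≤ (1 + NΩ * q y) * q y * (CE * (f / ν)) := by
        have := hq y
        gcongr
  have hsmall' : NΩ * (CE * (f / ν)) ≤ θ := by
    rwa [← mul_assoc, ← mul_div_assoc]
  calc q y ≤ CE * (f / ν) / (1 - θ) :=
        le_div_one_sub_of_sq_le (by positivity) hθ hsmall' hq_sq
    _ = (1 / (1 - θ)) * CE * f / ν := by ring

/-- Abstract form of Proposition 2.2: under the smallness condition
`N_Ω·C_E·f/ν ≤ θ`, every solution of the penalized equation satisfies the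
`ε`-independent bound `q(y) ≤ (1/(1−θ))·C_E·f/ν`. -/
theorem stmt_6 (V : Type*) [AddCommGroup V] [Module ℝ V]
    (p q : Seminorm ℝ V)
    (ν f Nω NΩ CE θ : ℝ) (hν : 0 < ν) (hf : 0 ≤ f) (hNω : 0 ≤ Nω) (hNΩ : 0 ≤ NΩ)
    (hCE : 0 < CE) (hθ0 : 0 < θ) (hθ1 : θ < 1)
    (aω aΩ : V →ₗ[ℝ] V →ₗ[ℝ] ℝ)
    (haω_coer : ∀ v, ν * p v ^ 2 ≤ aω v v)
    (haω_bdd : ∀ u v, |aω u v| ≤ ν * p u * p v)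
    (haΩ_coer : ∀ v, q v ^ 2 ≤ aΩ v v)
    (haΩ_bdd : ∀ u v, |aΩ u v| ≤ q u * q v)
    (cω cΩ : V →ₗ[ℝ] V →ₗ[ℝ] V →ₗ[ℝ] ℝ)
    (hcω_skew : ∀ u w, cω u w w = 0)
    (hcω_bdd : ∀ u v w, |cω u v w| ≤ Nω * p u * p v * p w)
    (hcΩ_skew : ∀ u w, cΩ u w w = 0)
    (hcΩ_bdd : ∀ u v w, |cΩ u v w| ≤ NΩ * q u * q v * q w)
    (F : V →ₗ[ℝ] ℝ) (hF : ∀ v, |F v| ≤ f * p v)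
    (E : V →ₗ[ℝ] V)
    (hE_ext : ∀ v, p (E v - v) = 0)
    (hE_bdd : ∀ v, q (E v) ≤ CE * p v)
    (hsmall : NΩ * CE * f / ν ≤ θ) :
    ∀ ε : ℝ, 0 < ε → ∀ y : V,
      (∀ v, aω y v + ε * aΩ y v + cω y y v + ε * cΩ y y v = F v) →
      q y ≤ (1 / (1 - θ)) * CE * f / ν := by
  intro ε hε y hy
  exact stmt_6_general (apply_nonneg q) hν hf hNΩ hCE.le hθ1
    (Aω := navierStokesOperator aω cω) (AΩ := navierStokesOperator aΩ cΩ)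
    (fun v => (haω_coer v).trans_eq (navierStokesOperator_apply_self (hcω_skew v v)).symm)
    (fun u v => navierStokesOperator_apply_eq_zero (haω_bdd u v) (hcω_bdd u u v))
    (fun v => (haΩ_coer v).trans_eq (navierStokesOperator_apply_self (hcΩ_skew v v)).symm)
    (fun u v => navierStokesOperator_apply_le (haΩ_bdd u v) (hcΩ_bdd u u v))
    hF hE_ext hE_bdd hsmall hε fun v => by
      simp only [navierStokesOperator_apply]
      linear_combination hy v
end

section
/- Let V be a real vector space, p, q : V → ℝ seminorms such that p(v) = 0 and q(v) = 0 imply v = 0, ν > 0, f ≥ 0, N_ω ≥ 0, N_Ω ≥ 0, C_E > 0, and let 0 < θ < 1. Let a_ω, a_Ω : V × V → ℝ be bilinear maps with a_ω(v,v) ≥ ν·p(v)², |a_ω(u,v)| ≤ ν·p(u)p(v), a_Ω(v,v) ≥ q(v)², |a_Ω(u,v)| ≤ q(u)q(v); let c_ω, c_Ω : V × V × V → ℝ be trilinear maps with c_ω(u,w,w) = 0, |c_ω(u,v,w)| ≤ N_ω·p(u)p(v)p(w), c_Ω(u,w,w) = 0, |c_Ω(u,v,w)| ≤ N_Ω·q(u)q(v)q(w);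 let F : V → ℝ be linear with |F(v)| ≤ f·p(v); and let E : V → V be a linear map with p(E(v) − v) = 0 and q(E(v)) ≤ C_E·p(v) for all v ∈ V. Assume N_ω·f ≤ θ·ν² and N_Ω·C_E·f/ν ≤ θ·(1−θ), set C₁ = (1+2θ)·C_E/((1−θ)·ν), and let 0 < ε < (1−θ)/(θ·ν·C₁²). If y, z ∈ V both satisfy a_ω(y,v) + ε·a_Ω(y,v) + c_ω(y,y,v) + ε·c_Ω(y,y,v) = F(v) and a_ω(z,v) + ε·a_Ω(z,v) + c_ω(z,z,v) + ε·c_Ω(z,z,v) = F(v) for all v ∈ V, then y = z. -/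
/-!
Testing the equation with `y` gives the energy bound `ν * p y ≤ f`, since convection vanishes on the
diagonal. Testing with `y - E y`, which `p` does not see, removes the `ω`-part and the load, so `y`
solves the homogeneous equation on `Ω` in the direction `y - E y`; this bounds `q y` in terms of
`p y`. Both convection terms are then small against the matching coercivity constants. Subtracting
the equations for `y` and `z` and testing with `w = y - z`, only `c w y w` survives of the
convection, so the `ω`-part dominates a positive multiple of `(p w) ^ 2` and the `Ω`-part a positive
multiple of `(q w) ^ 2`, while their `ε`-weighted sum is zero.
-/

section PenalizedNavierStokes

variable {V : Type*} [AddCommGroup V] [Module ℝ V]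

/-- The weak steady Navier–Stokes operator `u ↦ a(u, ·) + c(u, u, ·)`, where `a` stands for the
viscous form and `c` for the convection form. -/
def navierStokesForm (a : V →ₗ[ℝ] V →ₗ[ℝ] ℝ) (c : V →ₗ[ℝ] V →ₗ[ℝ] V →ₗ[ℝ] ℝ) (u : V) :
    V →ₗ[ℝ] ℝ :=
  a u + c u u

/-- The structural assumptions on the viscous form `a` and the convection form `c` of a
Navier–Stokes operator, measured in a seminorm `s`: coercivity with constant `ν`, boundedness with
constants `M` and `N`, and skew-symmetry of `c` in its last two arguments, encoded by its vanishing
on the diagonal. -/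
structure IsNavierStokesPair (s : Seminorm ℝ V) (ν M N : ℝ) (a : V →ₗ[ℝ] V →ₗ[ℝ] ℝ)
    (c : V →ₗ[ℝ] V →ₗ[ℝ] V →ₗ[ℝ] ℝ) : Prop where
  coercive : ∀ v, ν * s v ^ 2 ≤ a v v
  bounded : ∀ u v, |a u v| ≤ M * s u * s v
  convection_self : ∀ u w, c u w w = 0
  convection_bounded : ∀ u v w, |c u v w| ≤ N * s u * s v * s w

/-- `y` solves the penalized equation with penalization parameter `ε` and load `F`. -/
def IsPenalizedSolution (aω aΩ : V →ₗ[ℝ] V →ₗ[ℝ] ℝ) (cω cΩ : V →ₗ[ℝ] V →ₗ[ℝ] V →ₗ[ℝ] ℝ)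
    (ε : ℝ) (F : V →ₗ[ℝ] ℝ) (y : V) : Prop :=
  ∀ v, aω y v + ε * aΩ y v + cω y y v + ε * cΩ y y v = F v

theorem navierStokesForm_apply (a : V →ₗ[ℝ] V →ₗ[ℝ] ℝ) (c : V →ₗ[ℝ] V →ₗ[ℝ] V →ₗ[ℝ] ℝ) (u v : V) :
    navierStokesForm a c u v = a u v + c u u v :=
  rfl

namespace IsNavierStokesPair

variable {s : Seminorm ℝ V} {ν M N : ℝ} {a : V →ₗ[ℝ] V →ₗ[ℝ] ℝ}
  {c : V →ₗ[ℝ] V →ₗ[ℝ] V →ₗ[ℝ] ℝ}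

theorem mul_sq_le_navierStokesForm_self (h : IsNavierStokesPair s ν M N a c) (u : V) :
    ν * s u ^ 2 ≤ navierStokesForm a c u u := by
  rw [navierStokesForm_apply, h.convection_self, add_zero]
  exact h.coercive u

theorem abs_navierStokesForm_le (h : IsNavierStokesPair s ν M N a c) (u v : V) :
    |navierStokesForm a c u v| ≤ (M + N * s u) * s u * s v :=
  calc |navierStokesForm a c u v| ≤ |a u v| + |c u u v| := abs_add_le _ _
    _ ≤ M * s u * s v + N * s u * s u * s v :=
      add_le_add (h.bounded u v) (h.convection_bounded u u v)
    _ = (M + N * s u) * s u * s v := by ring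

theorem navierStokesForm_eq_zero (h : IsNavierStokesPair s ν M N a c) (u : V) {v : V}
    (hv : s v = 0) : navierStokesForm a c u v = 0 := by
  simpa [hv] using h.abs_navierStokesForm_le u v

theorem navierStokesForm_sub_navierStokesForm (h : IsNavierStokesPair s ν M N a c) (y z : V) :
    navierStokesForm a c y (y - z) - navierStokesForm a c z (y - z) =
      a (y - z) (y - z) + c (y - z) y (y - z) := by
  have hz : c z y (y - z) = c z z (y - z) := by
    simpa [sub_eq_zero] using h.convection_self z (y - z)
  simp only [navierStokesForm_apply, map_sub a, map_sub c, LinearMap.sub_apply]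
  rw [hz]
  ring

theorem mul_sq_le_navierStokesForm_sub_navierStokesForm (h : IsNavierStokesPair s ν M N a c)
    (y z : V) :
    (ν - N * s y) * s (y - z) ^ 2 ≤
      navierStokesForm a c y (y - z) - navierStokesForm a c z (y - z) := by
  have hc : -(N * s (y - z) * s y * s (y - z)) ≤ c (y - z) y (y - z) :=
    (abs_le.1 (h.convection_bounded (y - z) y (y - z))).1
  rw [h.navierStokesForm_sub_navierStokesForm]
  linarith [h.coercive (y - z)]

end IsNavierStokesPair

theorem mul_le_of_mul_sq_le_mul {a b x : ℝ} (hb : 0 ≤ b) (hx : 0 ≤ x) (h : a * x ^ 2 ≤ b * x) :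
    a * x ≤ b := by
  rcases hx.eq_or_lt with rfl | hx
  · simpa using hb
  · exact le_of_mul_le_mul_right (by linarith) hx

theorem lt_of_mul_le_add_mul {ν M r t : ℝ} (hν : 0 < ν) (hM : 0 ≤ M) (ht : 0 ≤ t)
    (hsmall : (M + ν) * t < ν ^ 2) (h : ν * r ≤ (M + r) * t) : r < ν := by
  have htν : t < ν := lt_of_mul_lt_mul_left (by nlinarith [mul_nonneg hM ht]) hν.le
  by_contra! hr
  nlinarith [mul_nonneg (sub_nonneg.2 hr) (sub_pos.2 htν).le]

namespace IsPenalizedSolution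

variable {p q : Seminorm ℝ V} {νω Mω Nω νΩ MΩ NΩ : ℝ} {aω aΩ : V →ₗ[ℝ] V →ₗ[ℝ] ℝ}
  {cω cΩ : V →ₗ[ℝ] V →ₗ[ℝ] V →ₗ[ℝ] ℝ} {ε f C : ℝ} {F : V →ₗ[ℝ] ℝ} {y z : V}

theorem navierStokesForm_add_mul (hy : IsPenalizedSolution aω aΩ cω cΩ ε F y) (v : V) :
    navierStokesForm aω cω y v + ε * navierStokesForm aΩ cΩ y v = F v := by
  rw [← hy v, navierStokesForm_apply, navierStokesForm_apply]
  ring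

theorem energy_le (hy : IsPenalizedSolution aω aΩ cω cΩ ε F y)
    (hω : IsNavierStokesPair p νω Mω Nω aω cω) (hΩ : IsNavierStokesPair q νΩ MΩ NΩ aΩ cΩ)
    (hνΩ : 0 ≤ νΩ) (hε : 0 ≤ ε) (hf : 0 ≤ f) (hF : ∀ v, |F v| ≤ f * p v) :
    νω * p y ≤ f := by
  have hΩ_nonneg : 0 ≤ ε * navierStokesForm aΩ cΩ y y :=
    mul_nonneg hε ((by positivity : 0 ≤ νΩ * q y ^ 2).trans (hΩ.mul_sq_le_navierStokesForm_self y))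
  refine mul_le_of_mul_sq_le_mul hf (apply_nonneg p y) ?_
  calc νω * p y ^ 2 ≤ navierStokesForm aω cω y y := hω.mul_sq_le_navierStokesForm_self y
    _ ≤ F y := by linarith [hy.navierStokesForm_add_mul y]
    _ ≤ f * p y := (le_abs_self _).trans (hF y)

theorem navierStokesForm_eq_zero (hy : IsPenalizedSolution aω aΩ cω cΩ ε F y)
    (hω : IsNavierStokesPair p νω Mω Nω aω cω) (hε : ε ≠ 0) (hF : ∀ v, |F v| ≤ f * p v) {v : V}
    (hv : p v = 0) : navierStokesForm aΩ cΩ y v = 0 := by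
  have hFv : F v = 0 := by simpa [hv] using hF v
  simpa [hω.navierStokesForm_eq_zero y hv, hFv, hε] using hy.navierStokesForm_add_mul v

theorem mul_le_of_extension (hy : IsPenalizedSolution aω aΩ cω cΩ ε F y)
    (hω : IsNavierStokesPair p νω Mω Nω aω cω) (hΩ : IsNavierStokesPair q νΩ MΩ NΩ aΩ cΩ)
    (hMΩ : 0 ≤ MΩ) (hNΩ : 0 ≤ NΩ) (hε : ε ≠ 0) (hF : ∀ v, |F v| ≤ f * p v) (hC : 0 ≤ C) {w : V}
    (hw_ext : p (w - y) = 0) (hw_bdd : q w ≤ C * p y) :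
    νΩ * q y ≤ (MΩ + NΩ * q y) * (C * p y) := by
  have hself : navierStokesForm aΩ cΩ y y = navierStokesForm aΩ cΩ y w := by
    have := hy.navierStokesForm_eq_zero hω hε hF hw_ext
    rw [map_sub, sub_eq_zero] at this
    exact this.symm
  refine mul_le_of_mul_sq_le_mul (by positivity) (apply_nonneg q y) ?_
  calc νΩ * q y ^ 2 ≤ navierStokesForm aΩ cΩ y w :=
        hself ▸ hΩ.mul_sq_le_navierStokesForm_self y
    _ ≤ (MΩ + NΩ * q y) * q y * q w := (le_abs_self _).trans (hΩ.abs_navierStokesForm_le y w)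
    _ ≤ (MΩ + NΩ * q y) * q y * (C * p y) := by gcongr
    _ = (MΩ + NΩ * q y) * (C * p y) * q y := by ring

theorem eq_of_mul_lt (hy : IsPenalizedSolution aω aΩ cω cΩ ε F y)
    (hz : IsPenalizedSolution aω aΩ cω cΩ ε F z) (hpq : ∀ v, p v = 0 → q v = 0 → v = 0)
    (hω : IsNavierStokesPair p νω Mω Nω aω cω) (hΩ : IsNavierStokesPair q νΩ MΩ NΩ aΩ cΩ)
    (hε : 0 < ε) (hpy : Nω * p y < νω) (hqy : NΩ * q y < νΩ) :
    y = z := by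
  have hdω := hω.mul_sq_le_navierStokesForm_sub_navierStokesForm y z
  have hdΩ := mul_le_mul_of_nonneg_left
    (hΩ.mul_sq_le_navierStokesForm_sub_navierStokesForm y z) hε.le
  have hgapω : 0 < νω - Nω * p y := sub_pos.2 hpy
  have hgapΩ : 0 < ε * (νΩ - NΩ * q y) := mul_pos hε (sub_pos.2 hqy)
  have hsum : (νω - Nω * p y) * p (y - z) ^ 2 + ε * (νΩ - NΩ * q y) * q (y - z) ^ 2 ≤ 0 := by
    linarith [hy.navierStokesForm_add_mul (y - z), hz.navierStokesForm_add_mul (y - z)]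
  obtain ⟨hp, hq⟩ := (add_eq_zero_iff_of_nonneg (by positivity) (by positivity)).1
    (hsum.antisymm (by positivity))
  refine sub_eq_zero.1 (hpq _ ?_ ?_)
  · simpa [hgapω.ne'] using hp
  · simpa [hgapΩ.ne'] using hq

end IsPenalizedSolution

end PenalizedNavierStokes

theorem stmt_8_general {V : Type*} [AddCommGroup V] [Module ℝ V]
    {p q : Seminorm ℝ V} (hpq : ∀ v : V, p v = 0 → q v = 0 → v = 0)
    {νω Mω Nω νΩ MΩ NΩ f C ε : ℝ} (hνω : 0 < νω) (hνΩ : 0 < νΩ) (hMΩ : 0 ≤ MΩ)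
    (hNω : 0 ≤ Nω) (hNΩ : 0 ≤ NΩ) (hf : 0 ≤ f) (hC : 0 ≤ C) (hε : 0 < ε)
    {aω aΩ : V →ₗ[ℝ] V →ₗ[ℝ] ℝ} {cω cΩ : V →ₗ[ℝ] V →ₗ[ℝ] V →ₗ[ℝ] ℝ}
    (hω : IsNavierStokesPair p νω Mω Nω aω cω) (hΩ : IsNavierStokesPair q νΩ MΩ NΩ aΩ cΩ)
    {F : V →ₗ[ℝ] ℝ} (hF : ∀ v, |F v| ≤ f * p v)
    {E : V → V} (hE_ext : ∀ v, p (E v - v) = 0) (hE_bdd : ∀ v, q (E v) ≤ C * p v)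
    (hsmallω : Nω * f < νω ^ 2) (hsmallΩ : (MΩ + νΩ) * (NΩ * C * f) < νω * νΩ ^ 2)
    {y z : V} (hy : IsPenalizedSolution aω aΩ cω cΩ ε F y)
    (hz : IsPenalizedSolution aω aΩ cω cΩ ε F z) :
    y = z := by
  have henergy : νω * p y ≤ f := hy.energy_le hω hΩ hνΩ.le hε.le hf hF
  have hext : νΩ * q y ≤ (MΩ + NΩ * q y) * (C * p y) :=
    hy.mul_le_of_extension hω hΩ hMΩ hNΩ hε.ne' hF hC (hE_ext y) (hE_bdd y)
  have hpy : Nω * p y < νω := by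
    refine lt_of_mul_lt_mul_left ?_ hνω.le
    linarith [mul_le_mul_of_nonneg_left henergy hNω]
  have hextension_small : (MΩ + νΩ) * (NΩ * (C * p y)) < νΩ ^ 2 := by
    refine lt_of_mul_lt_mul_left ?_ hνω.le
    calc νω * ((MΩ + νΩ) * (NΩ * (C * p y))) = (MΩ + νΩ) * (NΩ * C * (νω * p y)) := by ring
      _ ≤ (MΩ + νΩ) * (NΩ * C * f) := by gcongr
      _ < νω * νΩ ^ 2 := hsmallΩ
  have hqy : NΩ * q y < νΩ :=
    lt_of_mul_le_add_mul hνΩ hMΩ (by positivity) hextension_small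
      (by linarith [mul_le_mul_of_nonneg_left hext hNΩ])
  exact hy.eq_of_mul_lt hz hpq hω hΩ hε hpy hqy

/-- Abstract form of the uniqueness result for the penalized equation
(Proposition 2.4 / "Prop 2.3iii" of the paper): for small penalization parameter `ε`,
the solution of the penalized equation is unique. -/
theorem stmt_8 (V : Type*) [AddCommGroup V] [Module ℝ V]
    (p q : Seminorm ℝ V)
    (hpq : ∀ v : V, p v = 0 → q v = 0 → v = 0)
    (ν f Nω NΩ CE θ : ℝ) (hν : 0 < ν) (hf : 0 ≤ f) (hNω : 0 ≤ Nω) (hNΩ : 0 ≤ NΩ)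
    (hCE : 0 < CE) (hθ0 : 0 < θ) (hθ1 : θ < 1)
    (aω aΩ : V →ₗ[ℝ] V →ₗ[ℝ] ℝ)
    (haω_coer : ∀ v, ν * p v ^ 2 ≤ aω v v)
    (haω_bdd : ∀ u v, |aω u v| ≤ ν * p u * p v)
    (haΩ_coer : ∀ v, q v ^ 2 ≤ aΩ v v)
    (haΩ_bdd : ∀ u v, |aΩ u v| ≤ q u * q v)
    (cω cΩ : V →ₗ[ℝ] V →ₗ[ℝ] V →ₗ[ℝ] ℝ)
    (hcω_skew : ∀ u w, cω u w w = 0)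
    (hcω_bdd : ∀ u v w, |cω u v w| ≤ Nω * p u * p v * p w)
    (hcΩ_skew : ∀ u w, cΩ u w w = 0)
    (hcΩ_bdd : ∀ u v w, |cΩ u v w| ≤ NΩ * q u * q v * q w)
    (F : V →ₗ[ℝ] ℝ) (hF : ∀ v, |F v| ≤ f * p v)
    (E : V →ₗ[ℝ] V)
    (hE_ext : ∀ v, p (E v - v) = 0)
    (hE_bdd : ∀ v, q (E v) ≤ CE * p v)
    (hsmall1 : Nω * f ≤ θ * ν ^ 2)
    (hsmall2 : NΩ * CE * f / ν ≤ θ * (1 - θ))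
    (C₁ : ℝ) (hC₁ : C₁ = (1 + 2 * θ) * CE / ((1 - θ) * ν))
    (ε : ℝ) (hε0 : 0 < ε) (hε1 : ε < (1 - θ) / (θ * ν * C₁ ^ 2))
    (y z : V)
    (hy : ∀ v, aω y v + ε * aΩ y v + cω y y v + ε * cΩ y y v = F v)
    (hz : ∀ v, aω z v + ε * aΩ z v + cω z z v + ε * cΩ z z v = F v) :
    y = z := by
  have hΩ : IsNavierStokesPair q 1 1 NΩ aΩ cΩ :=
    ⟨by simpa using haΩ_coer, by simpa using haΩ_bdd, hcΩ_skew, hcΩ_bdd⟩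
  have hsmallω : Nω * f < ν ^ 2 := hsmall1.trans_lt (mul_lt_of_lt_one_left (pow_pos hν 2) hθ1)
  have hsmallΩ : (1 + 1) * (NΩ * CE * f) < ν * 1 ^ 2 := by
    have hθ : 2 * (θ * (1 - θ)) < 1 := by linarith [sq_nonneg (2 * θ - 1)]
    linarith [(div_le_iff₀ hν).1 hsmall2, mul_lt_mul_of_pos_right hθ hν]
  exact stmt_8_general hpq hν one_pos zero_le_one hNω hNΩ hf hCE.le hε0
    ⟨haω_coer, haω_bdd, hcω_skew, hcω_bdd⟩ hΩ hF hE_ext hE_bdd hsmallω hsmallΩ hy hz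
end
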